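/- Assume φ* = 1 and θ < 1. Then for all a, x ∈ ℕ₀ with a < x: lim_{q↓0} (Φ_q(a) − Φ_q(x))/q = ∫_0^1 (v^a − v^x) exp{−∫_θ^v μ(1 − r̃(w))/(λ(p̃(w) − w)) dw} / (λ(p̃(v) − v)) dv, both sides taking values in [0,∞]. -/

import Mathlib

open MeasureTheory Filter Set

/-- The probability generating function of the offspring distribution `p`. -/
noncomputable def ptilde (p : ℕ → ℝ) (z : ℝ) : ℝ := ∑' k, p k * z ^ k

/-- The p.g.f. of the immigration/culling mechanism: `rneg` is `r_{-1}`,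
`r k` for `k ≥ 1` are the immigration probabilities (we require `r 0 = 0`). -/
noncomputable def rtilde (rneg : ℝ) (r : ℕ → ℝ) (z : ℝ) : ℝ :=
  rneg / z + ∑' k, r k * z ^ k

/-- `f : ℕ → ℝ` is `q`-harmonic for the branching process with branching mechanism `p`
(rate `lam`) and immigration/culling mechanism `(rneg, r)` (rate `mu`). -/
def IsQHarmonic (lam mu q : ℝ) (p : ℕ → ℝ) (rneg : ℝ) (r : ℕ → ℝ) (f : ℕ → ℝ) : Prop :=
  ∀ x : ℕ, 1 ≤ x →
    (q + lam * x + mu) * f x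
      = lam * x * (∑' k, p k * f (x + k - 1))
        + mu * (rneg * f (x - 1) + ∑' k, r k * f (x + k))

/-- The harmonic function `Φ_q`; `φ` is the smallest fixed point of `ptilde p` in `(0,1]`
and `θ` is the delimiter `θ_q`. -/
noncomputable def Phi (lam mu : ℝ) (p : ℕ → ℝ) (rneg : ℝ) (r : ℕ → ℝ)
    (φ θ q : ℝ) (x : ℕ) : ℝ :=
  q * ∫ v in (0:ℝ)..φ,
      Real.exp (-∫ w in θ..v,
          (q + mu * (1 - rtilde rneg r w)) / (lam * |ptilde p w - w|))
        / (lam * |ptilde p v - v|) * v ^ x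

/-- The harmonic function `Ψ_q`. -/
noncomputable def Psi (lam mu : ℝ) (p : ℕ → ℝ) (rneg : ℝ) (r : ℕ → ℝ)
    (φ q : ℝ) (x : ℕ) : ℝ :=
  1 - q * ∫ v in φ..(1:ℝ),
      Real.exp (-∫ w in v..(1:ℝ),
          (q + mu * (1 - rtilde rneg r w)) / (lam * |ptilde p w - w|))
        / (lam * |ptilde p v - v|) * v ^ x

/-- Condition (E'): `∫_v^1 dz/(z - ptilde p z) < ∞` for some `v ∈ (φ, 1)`. -/
def CondE (p : ℕ → ℝ) (φ : ℝ) : Prop :=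
  ∃ v, φ < v ∧ v < 1 ∧
    IntervalIntegrable (fun z => 1 / (z - ptilde p z)) MeasureTheory.volume v 1

/-!
Write `ρ = λ (p̃ - id)` and `g = μ (1 - r̃)`. As `r̃` is convex, `q + g` passes from nonpositive to
nonnegative values at `θ_q`, and `g` does so at `θ`. Hence `∫_s^v (q + g)/ρ` is largest, as a
function of `s`, at `s = θ_q`, and `∫_s^v g/ρ` is largest at `s = θ`. Comparing the two base points,
`q ∫_θ^v 1/ρ ≤ ∫_{θ_q}^v (q + g)/ρ - ∫_θ^v g/ρ ≤ q ∫_0^v 1/ρ`.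
So the density of `Φ_q / q` converges pointwise as `q ↓ 0`, and it is dominated by its limit plus a
bound of `1/ρ` on `[0, θ]`. Dominated convergence gives the claim if the limit integral is finite,
Fatou's lemma if it is infinite.
-/

open scoped Topology ENNReal

section LebesgueIntegral

variable {α ι : Type*} [MeasurableSpace α] {μ : Measure α} {l : Filter ι} [l.NeBot]
  [l.IsCountablyGenerated] {F : ι → α → ℝ≥0∞} {f B : α → ℝ≥0∞}

lemma lintegral_le_liminf_of_tendsto (hF : ∀ᶠ i in l, AEMeasurable (F i) μ)
    (hlim : ∀ᵐ v ∂μ, Tendsto (fun i => F i v) l (𝓝 (f v))) :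
    ∫⁻ v, f v ∂μ ≤ liminf (fun i => ∫⁻ v, F i v ∂μ) l := by
  classical
  let G : ι → α → ℝ≥0∞ := fun i => if AEMeasurable (F i) μ then F i else 0
  have hGF : G =ᶠ[l] F := hF.mono fun i hi => if_pos hi
  have hG : ∀ i, AEMeasurable (G i) μ := fun i => by
    dsimp only [G]
    split_ifs with hi
    exacts [hi, aemeasurable_zero]
  have hGlim : ∀ᵐ v ∂μ, liminf (fun i => G i v) l = f v := by
    filter_upwards [hlim] with v hv
    exact (hv.congr' (hGF.mono fun i hi => (congrFun hi v).symm)).liminf_eq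
  calc ∫⁻ v, f v ∂μ = ∫⁻ v, liminf (fun i => G i v) l ∂μ :=
        (lintegral_congr_ae hGlim).symm
    _ ≤ liminf (fun i => ∫⁻ v, G i v ∂μ) l := lintegral_liminf_le' hG
    _ = liminf (fun i => ∫⁻ v, F i v ∂μ) l :=
        liminf_congr (hGF.mono fun i hi => by rw [hi])

/-- Dominated convergence if `f` has finite integral, Fatou's lemma otherwise. -/
theorem tendsto_lintegral_of_le_limit_add (hF : ∀ᶠ i in l, AEMeasurable (F i) μ)
    (hB : AEMeasurable B μ) (hBfin : ∫⁻ v, B v ∂μ ≠ ∞)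
    (hle : ∀ᶠ i in l, ∀ᵐ v ∂μ, F i v ≤ f v + B v)
    (hlim : ∀ᵐ v ∂μ, Tendsto (fun i => F i v) l (𝓝 (f v))) :
    Tendsto (fun i => ∫⁻ v, F i v ∂μ) l (𝓝 (∫⁻ v, f v ∂μ)) := by
  by_cases hf : ∫⁻ v, f v ∂μ = ∞
  · refine tendsto_of_le_liminf_of_limsup_le (lintegral_le_liminf_of_tendsto hF hlim) ?_
    exact hf ▸ le_top
  · refine tendsto_lintegral_filter_of_dominated_convergence' (fun v => f v + B v) hF hle ?_ hlim
    rw [lintegral_add_right' _ hB]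
    exact ENNReal.add_ne_top.2 ⟨hf, hBfin⟩

end LebesgueIntegral

theorem integrableOn_Ioo_of_hasDerivAt_of_nonneg_of_bounded {F f : ℝ → ℝ} {a b m M : ℝ}
    (hF : ∀ v ∈ Ioo a b, HasDerivAt F (f v) v) (hf : ∀ v ∈ Ioo a b, 0 ≤ f v)
    (hm : ∀ v ∈ Ioo a b, m ≤ F v) (hM : ∀ v ∈ Ioo a b, F v ≤ M) :
    IntegrableOn f (Ioo a b) := by
  have hmono : MonotoneOn F (Ioo a b) := by
    refine monotoneOn_of_deriv_nonneg (convex_Ioo a b)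
      (fun v hv => (hF v hv).continuousAt.continuousWithinAt) ?_ ?_ <;> rw [interior_Ioo]
    · exact fun v hv => (hF v hv).differentiableAt.differentiableWithinAt
    · exact fun v hv => (hF v hv).deriv ▸ hf v hv
  obtain ⟨G, hGmono, hFG⟩ := hmono.exists_monotone_extension
    ⟨m, forall_mem_image.2 hm⟩ ⟨M, forall_mem_image.2 hM⟩
  rcases le_total b a with hba | hab
  · simp [Ioo_eq_empty hba.not_gt]
  have hG : IntegrableOn (deriv G) (Ioo a b) :=
    ((intervalIntegrable_iff_integrableOn_Ioo_of_le hab).1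
      (hGmono.monotoneOn _).intervalIntegrable_deriv)
  refine hG.congr_fun (fun v hv => ?_) measurableSet_Ioo
  exact ((hF v hv).congr_of_eventuallyEq
    (hFG.symm.eventuallyEq_of_mem (isOpen_Ioo.mem_nhds hv))).deriv

lemma ofReal_integral_mul_pow_sub_integral_mul_pow {f : ℝ → ℝ} (hf : IntegrableOn f (Ioo 0 1))
    (hf0 : ∀ v ∈ Ioo (0 : ℝ) 1, 0 ≤ f v) {a x : ℕ} (hax : a ≤ x) :
    ENNReal.ofReal ((∫ v in (0 : ℝ)..1, f v * v ^ a) - ∫ v in (0 : ℝ)..1, f v * v ^ x)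
      = ∫⁻ v in Ioo (0 : ℝ) 1, ENNReal.ofReal ((v ^ a - v ^ x) * f v) := by
  have hintegrable (n : ℕ) : IntegrableOn (fun v => f v * v ^ n) (Ioo 0 1) := by
    refine Integrable.mul_bdd (c := 1) hf (by fun_prop)
      (ae_restrict_of_forall_mem measurableSet_Ioo fun v hv => ?_)
    rw [norm_pow, Real.norm_of_nonneg hv.1.le]
    exact pow_le_one₀ hv.1.le hv.2.le
  have hsub (v : ℝ) : (v ^ a - v ^ x) * f v = f v * v ^ a - f v * v ^ x := by ring
  simp only [intervalIntegral.integral_of_le zero_le_one, integral_Ioc_eq_integral_Ioo]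
  rw [← integral_sub (hintegrable a) (hintegrable x)]
  simp only [← hsub]
  refine ofReal_integral_eq_lintegral_ofReal ?_
    (ae_restrict_of_forall_mem measurableSet_Ioo fun v hv => ?_)
  · simp only [hsub]
    exact (hintegrable a).sub (hintegrable x)
  · exact mul_nonneg (sub_nonneg.2 (pow_le_pow_of_le_one hv.1.le hv.2.le hax)) (hf0 v hv)

/-- On `J`, the function `h` passes from nonpositive to nonnegative values at `s ∈ J`. A single
product inequality covers both sides of `s`; an endpoint of `J` is allowed. -/
def CrossesZeroAt (J : Set ℝ) (h : ℝ → ℝ) (s : ℝ) : Prop :=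
  s ∈ J ∧ ∀ w ∈ J, 0 ≤ (w - s) * h w

section CrossesZeroAt

variable {J S : Set ℝ} {f h ρ : ℝ → ℝ} {a b c s t v : ℝ}

lemma crossesZeroAt_Ico_left (hab : a < b) (hh : ∀ w ∈ Ico a b, 0 ≤ h w) :
    CrossesZeroAt (Ico a b) h a :=
  ⟨left_mem_Ico.2 hab, fun w hw => mul_nonneg (sub_nonneg.2 hw.1) (hh w hw)⟩

lemma crossesZeroAt_sub_of_convexOn (hf : ConvexOn ℝ S f) (hJ : J ⊆ S ∩ Iic b) (hb : b ∈ S)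
    (hs : s ∈ J) (hsb : s < b) (hfb : f b ≤ f s) : CrossesZeroAt J (fun w => f s - f w) s := by
  refine ⟨hs, fun w hw => ?_⟩
  obtain ⟨hwS, hwb⟩ := hJ hw
  rcases le_total w s with hws | hsw
  · exact mul_nonneg_of_nonpos_of_nonpos (sub_nonpos.2 hws)
      (sub_nonpos.2 (hf.le_left_of_right_le'' hwS hb hws hsb hfb))
  · have hfw : f w ≤ max (f s) (f b) := hf.le_max_of_mem_Icc (hJ hs).1 hb ⟨hsw, hwb⟩
    exact mul_nonneg (sub_nonneg.2 hsw) (sub_nonneg.2 (hfw.trans_eq (max_eq_left hfb)))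

namespace CrossesZeroAt

lemma nonneg_of_lt (hs : CrossesZeroAt J h s) (hv : v ∈ J) (hsv : s < v) : 0 ≤ h v :=
  (mul_nonneg_iff_of_pos_left (sub_pos.2 hsv)).1 (hs.2 v hv)

lemma nonpos_of_lt (hs : CrossesZeroAt J h s) (hv : v ∈ J) (hvs : v < s) : h v ≤ 0 :=
  nonpos_of_mul_nonneg_right (hs.2 v hv) (sub_neg.2 hvs)

lemma const_mul (hs : CrossesZeroAt J h s) (hc : 0 ≤ c) : CrossesZeroAt J (fun w => c * h w) s :=
  ⟨hs.1, fun w hw => mul_left_comm c (w - s) (h w) ▸ mul_nonneg hc (hs.2 w hw)⟩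

lemma div (hs : CrossesZeroAt J h s) (hρ : ∀ w ∈ J, 0 < ρ w) :
    CrossesZeroAt J (fun w => h w / ρ w) s :=
  ⟨hs.1, fun w hw => mul_div_assoc (w - s) (h w) (ρ w) ▸ div_nonneg (hs.2 w hw) (hρ w hw).le⟩

variable [hJ : J.OrdConnected]

lemma integral_nonneg (hs : CrossesZeroAt J h s) (hv : v ∈ J) : 0 ≤ ∫ w in s..v, h w := by
  rcases le_total s v with hsv | hvs
  · rw [intervalIntegral.integral_of_le hsv]
    exact setIntegral_nonneg measurableSet_Ioc fun w hw =>
      hs.nonneg_of_lt (hJ.out hs.1 hv (Ioc_subset_Icc_self hw)) hw.1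
  · rw [intervalIntegral.integral_of_ge hvs, integral_Ioc_eq_integral_Ioo]
    exact neg_nonneg.2 <| setIntegral_nonpos measurableSet_Ioo fun w hw =>
      hs.nonpos_of_lt (hJ.out hv hs.1 (Ioo_subset_Icc_self hw)) hw.2

lemma integral_le_integral (hs : CrossesZeroAt J h s) (hh : ContinuousOn h J) (ht : t ∈ J)
    (hv : v ∈ J) : ∫ w in t..v, h w ≤ ∫ w in s..v, h w := by
  rw [← intervalIntegral.integral_add_adjacent_intervals
    (hh.mono (hJ.uIcc_subset hs.1 ht)).intervalIntegrable
    (hh.mono (hJ.uIcc_subset ht hv)).intervalIntegrable]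
  exact le_add_of_nonneg_left (hs.integral_nonneg ht)

end CrossesZeroAt

end CrossesZeroAt

/-- The density `v ↦ exp (-∫_s^v h/ρ) / ρ v`. With `h = q + μ (1 - r̃)`, `ρ = λ (p̃ - id)` and
`s = θ_q` it is the density of the measure whose moments are `Φ_q / q`. -/
noncomputable def expDensity (h ρ : ℝ → ℝ) (s v : ℝ) : ℝ :=
  Real.exp (-∫ w in s..v, h w / ρ w) / ρ v

section ExpDensity

variable {J : Set ℝ} [hJ : J.OrdConnected] {f g h ρ κ θf : ℝ → ℝ} {a b c q s v θ C : ℝ}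

lemma hasDerivAt_integral_of_continuousOn (hf : ContinuousOn f J) (hs : s ∈ J) (hv : J ∈ 𝓝 v) :
    HasDerivAt (fun u => ∫ w in s..u, f w) (f v) v :=
  intervalIntegral.integral_hasDerivAt_right
    (hf.mono (hJ.uIcc_subset hs (mem_of_mem_nhds hv))).intervalIntegrable
    ((hf.mono interior_subset).stronglyMeasurableAtFilter isOpen_interior v
      (mem_interior_iff_mem_nhds.2 hv))
    (hf.continuousAt hv)

lemma expDensity_nonneg (hρv : 0 < ρ v) : 0 ≤ expDensity h ρ s v :=
  div_nonneg (Real.exp_pos _).le hρv.le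

lemma expDensity_le_one_div (hρv : 0 < ρ v) (hnonneg : 0 ≤ ∫ w in s..v, h w / ρ w) :
    expDensity h ρ s v ≤ 1 / ρ v :=
  div_le_div_of_nonneg_right (Real.exp_le_one_iff.2 (neg_nonpos.2 hnonneg)) hρv.le

lemma continuousOn_expDensity (hh : ContinuousOn h J) (hρ : ContinuousOn ρ J)
    (hρpos : ∀ w ∈ J, 0 < ρ w) (hs : s ∈ J) :
    ContinuousOn (expDensity h ρ s) (interior J) := by
  have hquot : ContinuousOn (fun w => h w / ρ w) J := hh.div hρ fun w hw => (hρpos w hw).ne'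
  have hprim : ContinuousOn (fun v => ∫ w in s..v, h w / ρ w) (interior J) := fun v hv =>
    (hasDerivAt_integral_of_continuousOn hquot hs
      (mem_interior_iff_mem_nhds.1 hv)).continuousAt.continuousWithinAt
  exact (Real.continuous_exp.comp_continuousOn hprim.neg).div (hρ.mono interior_subset)
    fun w hw => (hρpos w (interior_subset hw)).ne'

lemma hasDerivAt_neg_exp_neg_integral (hh : ContinuousOn h J) (hρ : ContinuousOn ρ J)
    (hρpos : ∀ w ∈ J, 0 < ρ w) (hs : s ∈ J) (hv : J ∈ 𝓝 v) :
    HasDerivAt (fun u => -Real.exp (-∫ w in s..u, h w / ρ w)) (h v * expDensity h ρ s v) v := by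
  have hquot : ContinuousOn (fun w => h w / ρ w) J := hh.div hρ fun w hw => (hρpos w hw).ne'
  refine (hasDerivAt_integral_of_continuousOn hquot hs hv).fun_neg.exp.fun_neg.congr_deriv ?_
  rw [expDensity]
  ring

/-- Where `h ≥ q`, the density is at most `1 / q` times the derivative of the bounded function
`-exp (-∫_s^v h/ρ)`. -/
lemma integrableOn_expDensity_of_le (hh : ContinuousOn h J) (hρ : ContinuousOn ρ J)
    (hρpos : ∀ w ∈ J, 0 < ρ w) (hs : CrossesZeroAt J h s) (hJcb : Ioo c b ⊆ J) (hq : 0 < q)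
    (hqh : ∀ w ∈ Ioo c b, q ≤ h w) : IntegrableOn (expDensity h ρ s) (Ioo c b) := by
  have hintegrable : IntegrableOn (fun v => h v * expDensity h ρ s v) (Ioo c b) := by
    refine integrableOn_Ioo_of_hasDerivAt_of_nonneg_of_bounded (m := -1) (M := 0)
      (fun v hv => hasDerivAt_neg_exp_neg_integral hh hρ hρpos hs.1
        (mem_of_superset (isOpen_Ioo.mem_nhds hv) hJcb)) (fun v hv => ?_) (fun v hv => ?_)
      fun v _ => neg_nonpos.2 (Real.exp_pos _).le
    · exact mul_nonneg (hq.le.trans (hqh v hv)) (expDensity_nonneg (hρpos v (hJcb hv)))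
    · exact neg_le_neg (Real.exp_le_one_iff.2
        (neg_nonpos.2 ((hs.div hρpos).integral_nonneg (hJcb hv))))
  refine (hintegrable.const_mul q⁻¹).mono'
    (((continuousOn_expDensity hh hρ hρpos hs.1).mono
      (isOpen_Ioo.subset_interior_iff.2 hJcb)).aestronglyMeasurable measurableSet_Ioo)
    (ae_restrict_of_forall_mem measurableSet_Ioo fun v hv => ?_)
  have hnonneg : 0 ≤ expDensity h ρ s v := expDensity_nonneg (hρpos v (hJcb hv))
  rw [Real.norm_of_nonneg hnonneg, ← mul_assoc]
  exact le_mul_of_one_le_left hnonneg ((one_le_inv_mul₀ hq).2 (hqh v hv))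

lemma exists_one_div_le (hρ : ContinuousOn ρ (Ico a b)) (hρpos : ∀ w ∈ Ico a b, 0 < ρ w)
    (hc : c < b) : ∃ C, ∀ v ∈ Icc a c, 1 / ρ v ≤ C := by
  have hsub : Icc a c ⊆ Ico a b := Icc_subset_Ico_right hc
  have hcont : ContinuousOn (fun w => 1 / ρ w) (Icc a c) :=
    continuousOn_const.div (hρ.mono hsub) fun w hw => (hρpos w (hsub hw)).ne'
  obtain ⟨C, hC⟩ := isCompact_Icc.exists_bound_of_continuousOn hcont
  exact ⟨C, fun v hv => (le_abs_self _).trans (hC v hv)⟩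

lemma integral_add_div_eq (hg : ContinuousOn g J) (hρ : ContinuousOn ρ J)
    (hρne : ∀ w ∈ J, ρ w ≠ 0) (hs : s ∈ J) (hv : v ∈ J) :
    ∫ w in s..v, (q + g w) / ρ w = q * (∫ w in s..v, 1 / ρ w) + ∫ w in s..v, g w / ρ w := by
  have hsub : uIcc s v ⊆ J := hJ.uIcc_subset hs hv
  have hone : IntervalIntegrable (fun w => 1 / ρ w) volume s v :=
    ((continuousOn_const.div hρ hρne).mono hsub).intervalIntegrable
  have hquot : IntervalIntegrable (fun w => g w / ρ w) volume s v :=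
    ((hg.div hρ hρne).mono hsub).intervalIntegrable
  rw [← intervalIntegral.integral_const_mul,
    ← intervalIntegral.integral_add (hone.const_mul q) hquot]
  simp only [add_div, mul_one_div]

lemma continuousOn_expDensity_Ioo (hρ : ContinuousOn ρ (Ico a b)) (hρpos : ∀ w ∈ Ico a b, 0 < ρ w)
    (hJ₁ : Ioo a b ⊆ J) (hJ₂ : J ⊆ Ico a b) (hh : ContinuousOn h J) (hs : s ∈ J) :
    ContinuousOn (expDensity h ρ s) (Ioo a b) :=
  (continuousOn_expDensity hh (hρ.mono hJ₂) (fun w hw => hρpos w (hJ₂ hw)) hs).mono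
    (isOpen_Ioo.subset_interior_iff.2 hJ₁)

lemma integrableOn_expDensity (hρ : ContinuousOn ρ (Ico a b)) (hρpos : ∀ w ∈ Ico a b, 0 < ρ w)
    (hJ₁ : Ioo a b ⊆ J) (hJ₂ : J ⊆ Ico a b) (hh : ContinuousOn h J) (hs : CrossesZeroAt J h s)
    (hc : c ∈ Ico a b) (hq : 0 < q) (hqh : ∀ w ∈ Ioo c b, q ≤ h w) :
    IntegrableOn (expDensity h ρ s) (Ioo a b) := by
  have hρposJ : ∀ w ∈ J, 0 < ρ w := fun w hw => hρpos w (hJ₂ hw)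
  have hsub : Ioc a c ⊆ Ioo a b := Ioc_subset_Ioo_right hc.2
  obtain ⟨C, hC⟩ := exists_one_div_le hρ hρpos hc.2
  have hleft : IntegrableOn (expDensity h ρ s) (Ioc a c) := by
    refine IntegrableOn.of_bound (C := C) measure_Ioc_lt_top
      (((continuousOn_expDensity_Ioo hρ hρpos hJ₁ hJ₂ hh hs.1).mono
        hsub).aestronglyMeasurable measurableSet_Ioc)
      (ae_restrict_of_forall_mem measurableSet_Ioc fun v hv => ?_)
    have hvJ : v ∈ J := hJ₁ (hsub hv)
    rw [Real.norm_of_nonneg (expDensity_nonneg (hρposJ v hvJ))]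
    exact (expDensity_le_one_div (hρposJ v hvJ) ((hs.div hρposJ).integral_nonneg hvJ)).trans
      (hC v (Ioc_subset_Icc_self hv))
  have hright : IntegrableOn (expDensity h ρ s) (Ioo c b) :=
    integrableOn_expDensity_of_le hh (hρ.mono hJ₂) hρposJ hs
      ((Ioo_subset_Ioo_left hc.1).trans hJ₁) hq hqh
  exact Ioc_union_Ioo_eq_Ioo hc.1 hc.2 ▸ hleft.union hright

lemma le_integral_add_div_of_crossesZeroAt (hρ : ContinuousOn ρ J) (hρpos : ∀ w ∈ J, 0 < ρ w)
    (hg : ContinuousOn g J) (hθ : θ ∈ J) (hs : CrossesZeroAt J (fun w => q + g w) s) (hv : v ∈ J) :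
    q * (∫ w in θ..v, 1 / ρ w) + ∫ w in θ..v, g w / ρ w ≤ ∫ w in s..v, (q + g w) / ρ w := by
  have hρne : ∀ w ∈ J, ρ w ≠ 0 := fun w hw => (hρpos w hw).ne'
  rw [← integral_add_div_eq hg hρ hρne hθ hv]
  exact (hs.div hρpos).integral_le_integral ((continuousOn_const.add hg).div hρ hρne) hθ hv

lemma integral_add_div_le_of_crossesZeroAt (hρ : ContinuousOn ρ (Ico a b))
    (hρpos : ∀ w ∈ Ico a b, 0 < ρ w) (hJ₂ : J ⊆ Ico a b) (hg : ContinuousOn g J)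
    (hθ : CrossesZeroAt J g θ) (hq : 0 ≤ q) (hs : s ∈ J) (hv : v ∈ J) :
    ∫ w in s..v, (q + g w) / ρ w ≤ q * (∫ w in a..v, 1 / ρ w) + ∫ w in θ..v, g w / ρ w := by
  have hρposJ : ∀ w ∈ J, 0 < ρ w := fun w hw => hρpos w (hJ₂ hw)
  have hone : CrossesZeroAt (Ico a b) (fun w => 1 / ρ w) a :=
    crossesZeroAt_Ico_left ((hJ₂ hs).1.trans_lt (hJ₂ hs).2) fun w hw =>
      one_div_nonneg.2 (hρpos w hw).le
  rw [integral_add_div_eq hg (hρ.mono hJ₂) (fun w hw => (hρposJ w hw).ne') hs hv]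
  gcongr
  · exact hone.integral_le_integral
      (continuousOn_const.div hρ fun w hw => (hρpos w hw).ne') (hJ₂ hs) (hJ₂ hv)
  · exact (hθ.div hρposJ).integral_le_integral
      (hg.div (hρ.mono hJ₂) fun w hw => (hρposJ w hw).ne') hs hv

lemma tendsto_expDensity (hρ : ContinuousOn ρ (Ico a b)) (hρpos : ∀ w ∈ Ico a b, 0 < ρ w)
    (hJ₂ : J ⊆ Ico a b) (hg : ContinuousOn g J) (hθ : CrossesZeroAt J g θ)
    (hθf : ∀ q, 0 < q → CrossesZeroAt J (fun w => q + g w) (θf q)) (hv : v ∈ J) :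
    Tendsto (fun q => expDensity (fun w => q + g w) ρ (θf q) v) (𝓝[>] 0)
      (𝓝 (expDensity g ρ θ v)) := by
  have hlin (c : ℝ) : Tendsto (fun q => q * c + ∫ w in θ..v, g w / ρ w) (𝓝[>] 0)
      (𝓝 (∫ w in θ..v, g w / ρ w)) := by
    refine tendsto_nhdsWithin_of_tendsto_nhds (Continuous.tendsto' (by fun_prop) _ _ ?_)
    rw [zero_mul, zero_add]
  have hexponent : Tendsto (fun q => ∫ w in θf q..v, (q + g w) / ρ w) (𝓝[>] 0)
      (𝓝 (∫ w in θ..v, g w / ρ w)) := by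
    refine tendsto_of_tendsto_of_tendsto_of_le_of_le' (hlin (∫ w in θ..v, 1 / ρ w))
      (hlin (∫ w in a..v, 1 / ρ w)) ?_ ?_ <;> filter_upwards [self_mem_nhdsWithin] with q hq
    · exact le_integral_add_div_of_crossesZeroAt (hρ.mono hJ₂) (fun w hw => hρpos w (hJ₂ hw)) hg
        hθ.1 (hθf q hq) hv
    · exact integral_add_div_le_of_crossesZeroAt hρ hρpos hJ₂ hg hθ (le_of_lt hq) (hθf q hq).1 hv
  exact ((Real.continuous_exp.tendsto _).comp hexponent.neg).div_const _

lemma expDensity_le_expDensity_add (hρ : ContinuousOn ρ J) (hρpos : ∀ w ∈ J, 0 < ρ w)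
    (hg : ContinuousOn g J) (hθ : θ ∈ J) (hq : 0 ≤ q) (hs : CrossesZeroAt J (fun w => q + g w) s)
    (hC : ∀ w ∈ J, w ≤ θ → 1 / ρ w ≤ C) (hC0 : 0 ≤ C) (hv : v ∈ J) :
    expDensity (fun w => q + g w) ρ s v ≤ expDensity g ρ θ v + C := by
  rcases le_total v θ with hvθ | hθv
  · calc expDensity (fun w => q + g w) ρ s v ≤ 1 / ρ v :=
          expDensity_le_one_div (hρpos v hv) ((hs.div hρpos).integral_nonneg hv)
      _ ≤ C := hC v hv hvθ
      _ ≤ expDensity g ρ θ v + C := le_add_of_nonneg_left (expDensity_nonneg (hρpos v hv))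
  · have hone : 0 ≤ ∫ w in θ..v, 1 / ρ w := intervalIntegral.integral_nonneg hθv fun w hw =>
      one_div_nonneg.2 (hρpos w (hJ.out hθ hv hw)).le
    have hexponent : ∫ w in θ..v, g w / ρ w ≤ ∫ w in s..v, (q + g w) / ρ w :=
      (le_add_of_nonneg_left (mul_nonneg hq hone)).trans
        (le_integral_add_div_of_crossesZeroAt hρ hρpos hg hθ hs hv)
    exact (div_le_div_of_nonneg_right (Real.exp_le_exp.2 (neg_le_neg hexponent))
      (hρpos v hv).le).trans (le_add_of_nonneg_right hC0)

theorem tendsto_lintegral_mul_expDensity (hρ : ContinuousOn ρ (Ico a b))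
    (hρpos : ∀ w ∈ Ico a b, 0 < ρ w) (hJ₁ : Ioo a b ⊆ J) (hJ₂ : J ⊆ Ico a b) (hg : ContinuousOn g J)
    (hθ : CrossesZeroAt J g θ) (hθf : ∀ q, 0 < q → CrossesZeroAt J (fun w => q + g w) (θf q))
    (hκ : AEMeasurable κ (volume.restrict (Ioo a b))) (hκ0 : ∀ v ∈ Ioo a b, 0 ≤ κ v)
    (hκ1 : ∀ v ∈ Ioo a b, κ v ≤ 1) :
    Tendsto (fun q => ∫⁻ v in Ioo a b,
        ENNReal.ofReal (κ v * expDensity (fun w => q + g w) ρ (θf q) v)) (𝓝[>] 0)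
      (𝓝 (∫⁻ v in Ioo a b, ENNReal.ofReal (κ v * expDensity g ρ θ v))) := by
  obtain ⟨C, hC⟩ := exists_one_div_le hρ hρpos (hJ₂ hθ.1).2
  have hC0 : 0 ≤ C := (one_div_nonneg.2 (hρpos θ (hJ₂ hθ.1)).le).trans
    (hC θ (right_mem_Icc.2 (hJ₂ hθ.1).1))
  refine tendsto_lintegral_of_le_limit_add (B := fun _ => ENNReal.ofReal C) ?_
    aemeasurable_const ?_ ?_ ?_
  · filter_upwards [self_mem_nhdsWithin] with q hq
    exact (hκ.mul ((continuousOn_expDensity_Ioo hρ hρpos hJ₁ hJ₂ (continuousOn_const.add hg)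
      (hθf q hq).1).aemeasurable measurableSet_Ioo)).ennreal_ofReal
  · rw [setLIntegral_const]
    exact ENNReal.mul_ne_top ENNReal.ofReal_ne_top measure_Ioo_lt_top.ne
  · filter_upwards [self_mem_nhdsWithin] with q hq
    refine ae_restrict_of_forall_mem measurableSet_Ioo fun v hv => ?_
    have hle : expDensity (fun w => q + g w) ρ (θf q) v ≤ expDensity g ρ θ v + C :=
      expDensity_le_expDensity_add (hρ.mono hJ₂) (fun w hw => hρpos w (hJ₂ hw)) hg hθ.1
        (le_of_lt hq) (hθf q hq) (fun w hw hwθ => hC w ⟨(hJ₂ hw).1, hwθ⟩) hC0 (hJ₁ hv)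
    refine (ENNReal.ofReal_le_ofReal ?_).trans ENNReal.ofReal_add_le
    calc κ v * expDensity (fun w => q + g w) ρ (θf q) v ≤ κ v * (expDensity g ρ θ v + C) :=
          mul_le_mul_of_nonneg_left hle (hκ0 v hv)
      _ = κ v * expDensity g ρ θ v + κ v * C := mul_add ..
      _ ≤ κ v * expDensity g ρ θ v + C := by gcongr; exact mul_le_of_le_one_left hC0 (hκ1 v hv)
  · exact ae_restrict_of_forall_mem measurableSet_Ioo fun v hv => ENNReal.tendsto_ofReal
      ((tendsto_expDensity hρ hρpos hJ₂ hg hθ hθf (hJ₁ hv)).const_mul _)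

end ExpDensity

section GeneratingFunction

variable {s : ℕ → ℝ} {w : ℝ}

lemma summable_of_tsum_ne_zero (h : ∑' k, s k ≠ 0) : Summable s :=
  by_contra fun hs => h (tsum_eq_zero_of_not_summable hs)

lemma ptilde_zero (s : ℕ → ℝ) : ptilde s 0 = s 0 := by
  rw [ptilde, tsum_eq_single 0 fun k hk => by simp [hk]]
  simp

lemma mul_pow_le_self (hs : ∀ k, 0 ≤ s k) (hw : w ∈ Icc (0 : ℝ) 1) (k : ℕ) : s k * w ^ k ≤ s k :=
  mul_le_of_le_one_right (hs k) (pow_le_one₀ hw.1 hw.2)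

lemma summable_mul_pow (hs : ∀ k, 0 ≤ s k) (hsum : Summable s) (hw : w ∈ Icc (0 : ℝ) 1) :
    Summable fun k => s k * w ^ k :=
  hsum.of_nonneg_of_le (fun k => mul_nonneg (hs k) (pow_nonneg hw.1 k)) (mul_pow_le_self hs hw)

lemma ptilde_le_tsum (hs : ∀ k, 0 ≤ s k) (hsum : Summable s) (hw : w ∈ Icc (0 : ℝ) 1) :
    ptilde s w ≤ ∑' k, s k :=
  (summable_mul_pow hs hsum hw).tsum_le_tsum (mul_pow_le_self hs hw) hsum

lemma continuousOn_ptilde (hs : ∀ k, 0 ≤ s k) (hsum : Summable s) :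
    ContinuousOn (ptilde s) (Icc 0 1) := by
  refine continuousOn_tsum (fun k => by fun_prop) hsum fun k w hw => ?_
  rw [Real.norm_of_nonneg (mul_nonneg (hs k) (pow_nonneg hw.1 k))]
  exact mul_pow_le_self hs hw k

lemma convexOn_ptilde (hs : ∀ k, 0 ≤ s k) (hsum : Summable s) :
    ConvexOn ℝ (Icc 0 1) (ptilde s) := by
  refine ⟨convex_Icc 0 1, fun y hy z hz c d hc hd hcd => ?_⟩
  have hy_sum := (summable_mul_pow hs hsum hy).mul_left c
  have hz_sum := (summable_mul_pow hs hsum hz).mul_left d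
  simp only [ptilde, smul_eq_mul]
  rw [← tsum_mul_left, ← tsum_mul_left, ← hy_sum.tsum_add hz_sum]
  refine (summable_mul_pow hs hsum (convex_Icc (0 : ℝ) 1 hy hz hc hd hcd)).tsum_le_tsum
    (fun k => ?_) (hy_sum.add hz_sum)
  calc s k * (c * y + d * z) ^ k ≤ s k * (c * y ^ k + d * z ^ k) :=
        mul_le_mul_of_nonneg_left ((convexOn_pow k).2 hy.1 hz.1 hc hd hcd) (hs k)
    _ = c * (s k * y ^ k) + d * (s k * z ^ k) := by ring

end GeneratingFunction

section ImmigrationCulling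

variable {mu rneg q z θ : ℝ} {r : ℕ → ℝ} {θf : ℝ → ℝ}

lemma continuousOn_rtilde (hr : ∀ k, 0 ≤ r k) (hrsum : Summable r) :
    ContinuousOn (rtilde rneg r) (Ioc 0 1) :=
  (continuousOn_const.div continuousOn_id fun _ hw => hw.1.ne').add
    ((continuousOn_ptilde hr hrsum).mono Ioc_subset_Icc_self)

lemma convexOn_rtilde (hrneg : 0 ≤ rneg) (hr : ∀ k, 0 ≤ r k) (hrsum : Summable r) :
    ConvexOn ℝ (Ioc 0 1) (rtilde rneg r) := by
  have hinv : ConvexOn ℝ (Ioc (0 : ℝ) 1) fun z => z ^ (-1 : ℤ) :=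
    (convexOn_zpow (-1)).subset (fun _ hz => hz.1) (convex_Ioc 0 1)
  refine ((hinv.smul hrneg).add
    ((convexOn_ptilde hr hrsum).subset Ioc_subset_Icc_self (convex_Ioc 0 1))).congr fun z _ => ?_
  simp only [Pi.add_apply, smul_eq_mul, zpow_neg_one, rtilde, ptilde, div_eq_mul_inv]

/-- Excludes the junk case `rneg = 1`, `∑' k, r k = 0` with `r` not summable. -/
lemma summable_of_rtilde_le_one (hr : ∀ k, 0 ≤ r k) (hrsum : rneg + ∑' k, r k = 1)
    (hz : z ∈ Ioo (0 : ℝ) 1) (hrz : rtilde rneg r z ≤ 1) : Summable r := by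
  by_contra hnot
  rw [tsum_eq_zero_of_not_summable hnot, add_zero] at hrsum
  have hpos : 0 ≤ ∑' k, r k * z ^ k :=
    tsum_nonneg fun k => mul_nonneg (hr k) (pow_nonneg hz.1.le k)
  have hdiv : 1 < rneg / z := (one_lt_div hz.1).2 (hz.2.trans_eq hrsum.symm)
  rw [rtilde] at hrz
  linarith

lemma continuousOn_and_nonneg_mul_one_sub_rtilde (hmu : 0 ≤ mu) (hr : ∀ k, 0 ≤ r k)
    (hrsum : rneg + ∑' k, r k = 1) (hzero : mu * rneg = 0) :
    ContinuousOn (fun w => mu * (1 - rtilde rneg r w)) (Ico 0 1) ∧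
      ∀ w ∈ Ico (0 : ℝ) 1, 0 ≤ mu * (1 - rtilde rneg r w) := by
  rcases mul_eq_zero.1 hzero with rfl | rfl
  · simp [continuousOn_const]
  · rw [zero_add] at hrsum
    have hsum : Summable r := summable_of_tsum_ne_zero (hrsum ▸ one_ne_zero)
    have hrp : rtilde 0 r = ptilde r := by
      funext w
      simp [rtilde, ptilde]
    rw [hrp]
    refine ⟨continuousOn_const.mul (continuousOn_const.sub
      ((continuousOn_ptilde hr hsum).mono Ico_subset_Icc_self)), fun w hw => ?_⟩
    exact mul_nonneg hmu
      (sub_nonneg.2 ((ptilde_le_tsum hr hsum (Ico_subset_Icc_self hw)).trans_eq hrsum))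

lemma continuousOn_mul_one_sub_rtilde (hr : ∀ k, 0 ≤ r k) (hrsum : Summable r) :
    ContinuousOn (fun w => mu * (1 - rtilde rneg r w)) (Ioo 0 1) :=
  continuousOn_const.mul
    (continuousOn_const.sub ((continuousOn_rtilde hr hrsum).mono Ioo_subset_Ioc_self))

lemma crossesZeroAt_add_mul_one_sub_rtilde (hmu : 0 < mu) (hrneg : 0 ≤ rneg) (hr : ∀ k, 0 ≤ r k)
    (hsum : Summable r) (hrsum : rneg + ∑' k, r k = 1) (hq : 0 ≤ q) (hz : z ∈ Ioo (0 : ℝ) 1)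
    (hrz : q = mu * (rtilde rneg r z - 1)) :
    CrossesZeroAt (Ioo 0 1) (fun w => q + mu * (1 - rtilde rneg r w)) z := by
  have hone : rtilde rneg r 1 = 1 := by simpa [rtilde] using hrsum
  have hone_le : 1 ≤ rtilde rneg r z :=
    sub_nonneg.1 ((mul_nonneg_iff_of_pos_left hmu).1 (hq.trans_eq hrz))
  have hcross : CrossesZeroAt (Ioo 0 1) (fun w => rtilde rneg r z - rtilde rneg r w) z :=
    crossesZeroAt_sub_of_convexOn (convexOn_rtilde hrneg hr hsum)
      (fun w hw => ⟨Ioo_subset_Ioc_self hw, hw.2.le⟩) (right_mem_Ioc.2 one_pos) hz hz.2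
      (hone.trans_le hone_le)
  simpa only [hrz, ← mul_add, sub_add_sub_cancel] using hcross.const_mul hmu.le

/-- `J` contains `0` exactly if there is no culling: then `μ (1 - r̃)` is continuous
at `0` and `θ = θ_q = 0`, while otherwise `r̃` blows up at `0` and `θ`, `θ_q` are positive. -/
lemma exists_crossesZeroAt_mul_one_sub_rtilde (hmu : 0 ≤ mu) (hrneg : 0 ≤ rneg)
    (hr : ∀ k, 0 ≤ r k) (hrsum : rneg + ∑' k, r k = 1)
    (hθpos : 0 < mu * rneg → θ ∈ Ioo (0 : ℝ) 1 ∧ rtilde rneg r θ = 1)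
    (hθzero : mu * rneg = 0 → θ = 0)
    (hθfpos : 0 < mu * rneg → ∀ q : ℝ, 0 < q →
      θf q ∈ Ioo (0 : ℝ) 1 ∧ q = mu * (rtilde rneg r (θf q) - 1))
    (hθfzero : mu * rneg = 0 → ∀ q : ℝ, 0 < q → θf q = 0) :
    ∃ J : Set ℝ, J.OrdConnected ∧ Ioo 0 1 ⊆ J ∧ J ⊆ Ico 0 1 ∧
      ContinuousOn (fun w => mu * (1 - rtilde rneg r w)) J ∧
      CrossesZeroAt J (fun w => mu * (1 - rtilde rneg r w)) θ ∧
      ∀ q, 0 < q → CrossesZeroAt J (fun w => q + mu * (1 - rtilde rneg r w)) (θf q) := by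
  rcases (mul_nonneg hmu hrneg).eq_or_lt' with hzero | hpos
  · obtain ⟨hcont, hnonneg⟩ := continuousOn_and_nonneg_mul_one_sub_rtilde hmu hr hrsum hzero
    refine ⟨Ico 0 1, ordConnected_Ico, Ioo_subset_Ico_self, subset_rfl, hcont, ?_, fun q hq => ?_⟩
    · rw [hθzero hzero]
      exact crossesZeroAt_Ico_left one_pos hnonneg
    · rw [hθfzero hzero q hq]
      exact crossesZeroAt_Ico_left one_pos fun w hw => add_nonneg hq.le (hnonneg w hw)
  · obtain ⟨hθmem, hrθ⟩ := hθpos hpos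
    have hmupos : 0 < mu := hmu.lt_of_ne' (left_ne_zero_of_mul hpos.ne')
    have hsum : Summable r := summable_of_rtilde_le_one hr hrsum hθmem hrθ.le
    refine ⟨Ioo 0 1, ordConnected_Ioo, subset_rfl, Ioo_subset_Ico_self,
      continuousOn_mul_one_sub_rtilde hr hsum, ?_, fun q hq => ?_⟩
    · simpa only [zero_add] using crossesZeroAt_add_mul_one_sub_rtilde hmupos hrneg hr hsum hrsum
        le_rfl hθmem (by rw [hrθ, sub_self, mul_zero])
    · exact crossesZeroAt_add_mul_one_sub_rtilde hmupos hrneg hr hsum hrsum hq.le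
        (hθfpos hpos q hq).1 (hθfpos hpos q hq).2

end ImmigrationCulling

section Phi

variable {lam mu rneg q s : ℝ} {p r : ℕ → ℝ} {a x : ℕ}

lemma Phi_eq_mul_integral_expDensity (hp : ∀ w ∈ Ico (0 : ℝ) 1, w < ptilde p w)
    (hs : s ∈ Ico (0 : ℝ) 1) (x : ℕ) :
    Phi lam mu p rneg r 1 s q x = q * ∫ v in (0 : ℝ)..1,
      expDensity (fun w => q + mu * (1 - rtilde rneg r w)) (fun w => lam * (ptilde p w - w)) s v
        * v ^ x := by
  have habs : ∀ w ∈ Ico (0 : ℝ) 1, |ptilde p w - w| = ptilde p w - w := fun w hw =>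
    abs_of_pos (sub_pos.2 (hp w hw))
  rw [Phi]
  congr 1
  refine intervalIntegral.integral_congr_Ioo_of_le zero_le_one fun v hv => ?_
  have hexponent : ∫ w in s..v, (q + mu * (1 - rtilde rneg r w)) / (lam * |ptilde p w - w|)
      = ∫ w in s..v, (q + mu * (1 - rtilde rneg r w)) / (lam * (ptilde p w - w)) :=
    intervalIntegral.integral_congr fun w hw => by
      rw [habs w (ordConnected_Ico.uIcc_subset hs (Ioo_subset_Ico_self hv) hw)]
  dsimp only [expDensity]
  rw [hexponent, habs v (Ioo_subset_Ico_self hv)]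

variable {J : Set ℝ} [J.OrdConnected] {θ : ℝ} {θf : ℝ → ℝ}

theorem tendsto_ofReal_Phi_sub_Phi_div (hlam : 0 < lam) (hpcont : ContinuousOn (ptilde p) (Icc 0 1))
    (hp : ∀ w ∈ Ico (0 : ℝ) 1, w < ptilde p w) (hJ₁ : Ioo 0 1 ⊆ J) (hJ₂ : J ⊆ Ico 0 1)
    (hg : ContinuousOn (fun w => mu * (1 - rtilde rneg r w)) J)
    (hθ : CrossesZeroAt J (fun w => mu * (1 - rtilde rneg r w)) θ)
    (hθf : ∀ q, 0 < q → CrossesZeroAt J (fun w => q + mu * (1 - rtilde rneg r w)) (θf q))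
    (hax : a ≤ x) :
    Tendsto (fun q => ENNReal.ofReal
        ((Phi lam mu p rneg r 1 (θf q) q a - Phi lam mu p rneg r 1 (θf q) q x) / q)) (𝓝[>] 0)
      (𝓝 (∫⁻ v in Ioo (0 : ℝ) 1, ENNReal.ofReal ((v ^ a - v ^ x) * expDensity
        (fun w => mu * (1 - rtilde rneg r w)) (fun w => lam * (ptilde p w - w)) θ v))) := by
  have hρ : ContinuousOn (fun w => lam * (ptilde p w - w)) (Ico 0 1) :=
    continuousOn_const.mul ((hpcont.mono Ico_subset_Icc_self).sub continuousOn_id)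
  have hρpos : ∀ w ∈ Ico (0 : ℝ) 1, 0 < lam * (ptilde p w - w) := fun w hw =>
    mul_pos hlam (sub_pos.2 (hp w hw))
  refine (tendsto_lintegral_mul_expDensity hρ hρpos hJ₁ hJ₂ hg hθ hθf
    (κ := fun v => v ^ a - v ^ x) (by fun_prop) (fun v hv => ?_) fun v hv => ?_).congr' ?_
  · exact sub_nonneg.2 (pow_le_pow_of_le_one hv.1.le hv.2.le hax)
  · exact (sub_le_self _ (pow_nonneg hv.1.le x)).trans (pow_le_one₀ hv.1.le hv.2.le)
  filter_upwards [self_mem_nhdsWithin] with q hq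
  have hintegrable : IntegrableOn (expDensity (fun w => q + mu * (1 - rtilde rneg r w))
      (fun w => lam * (ptilde p w - w)) (θf q)) (Ioo 0 1) :=
    integrableOn_expDensity hρ hρpos hJ₁ hJ₂ (continuousOn_const.add hg) (hθf q hq)
      (hJ₂ hθ.1) hq fun w hw => le_add_of_nonneg_right
        (hθ.nonneg_of_lt (hJ₁ (Ioo_subset_Ioo_left (hJ₂ hθ.1).1 hw)) hw.1)
  rw [Phi_eq_mul_integral_expDensity hp (hJ₂ (hθf q hq).1) a,
    Phi_eq_mul_integral_expDensity hp (hJ₂ (hθf q hq).1) x, ← mul_sub,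
    mul_div_cancel_left₀ _ (ne_of_gt hq), ofReal_integral_mul_pow_sub_integral_mul_pow hintegrable
      (fun v hv => expDensity_nonneg (hρpos v (Ioo_subset_Ico_self hv))) hax]

end Phi

/-- assume `φ* = 1` and `θ < 1`. For all `a < x` in `ℕ`,
`lim_{q↓0} (Φ_q(a) - Φ_q(x))/q
  = ∫_0^1 (v^a - v^x) exp{-∫_θ^v μ(1-r̃(w))/(λ(p̃(w)-w)) dw}/(λ(p̃(v)-v)) dv`,
both sides taking values in `[0,∞]` (formalized in `ℝ≥0∞` via `ENNReal.ofReal`). -/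
theorem stmt15 (lam mu rneg : ℝ) (p r : ℕ → ℝ) (φ θ : ℝ) (θf : ℝ → ℝ)
    (hlam : 0 < lam)
    (hp : ∀ k, 0 ≤ p k) (hpsum : ∑' k, p k = 1) (hp0 : 0 < p 0) (hp1 : p 1 = 0)
    (hφ0 : 0 < φ) (hφfix : ptilde p φ = φ)
    (hφlo : ∀ z : ℝ, 0 < z → z < φ → z < ptilde p z)
    (hφeq : φ = 1)
    (hmu : 0 ≤ mu) (hrneg : 0 ≤ rneg) (hr : ∀ k, 0 ≤ r k) (hr0 : r 0 = 0)
    (hrsum : rneg + ∑' k, r k = 1)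
    (hnontriv : p 0 < 1 ∨ ∃ k : ℕ, 1 ≤ k ∧ 0 < mu * r k)
    (hθfpos : 0 < mu * rneg → ∀ q : ℝ, 0 < q →
      θf q ∈ Set.Ioo (0:ℝ) 1 ∧ q = mu * (rtilde rneg r (θf q) - 1))
    (hθfzero : mu * rneg = 0 → ∀ q : ℝ, 0 < q → θf q = 0)
    (hθpos : 0 < mu * rneg → θ ∈ Set.Ioc (0:ℝ) 1 ∧ rtilde rneg r θ = 1 ∧
      ∀ z ∈ Set.Ioc (0:ℝ) 1, rtilde rneg r z = 1 → θ ≤ z)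
    (hθzero : mu * rneg = 0 → θ = 0)
    (hθlt : θ < 1) :
    ∀ a x : ℕ, a < x →
      Filter.Tendsto (fun q =>
          ENNReal.ofReal ((Phi lam mu p rneg r φ (θf q) q a
            - Phi lam mu p rneg r φ (θf q) q x) / q))
        (nhdsWithin 0 (Set.Ioi 0))
        (nhds (∫⁻ v in Set.Ioo (0:ℝ) 1,
          ENNReal.ofReal ((v ^ a - v ^ x)
            * Real.exp (-∫ w in θ..v, mu * (1 - rtilde rneg r w)
                / (lam * (ptilde p w - w)))
            / (lam * (ptilde p v - v))))) := by
  subst hφeq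
  intro a x hax
  have hpsummable : Summable p := summable_of_tsum_ne_zero (hpsum ▸ one_ne_zero)
  have hlt : ∀ w ∈ Ico (0 : ℝ) 1, w < ptilde p w := fun w hw =>
    hw.1.eq_or_lt.elim (fun h => h ▸ hp0.trans_eq (ptilde_zero p).symm) fun h => hφlo w h hw.2
  obtain ⟨J, hJ, hJ₁, hJ₂, hg, hθ, hθf⟩ :=
    exists_crossesZeroAt_mul_one_sub_rtilde hmu hrneg hr hrsum
      (fun hpos => ⟨⟨(hθpos hpos).1.1, hθlt⟩, (hθpos hpos).2.1⟩) hθzero hθfpos hθfzero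
  simpa only [expDensity, mul_div_assoc] using tendsto_ofReal_Phi_sub_Phi_div hlam
    (continuousOn_ptilde hp hpsummable) hlt hJ₁ hJ₂ hg hθ hθf hax.le
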